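/- At optimality the residual energies on the common unknown coefficients vanish together: Assume e_x > 0 and e_q > 0 in the compressed-distance program. Then every optimal pair (a, b) satisfies: ∑_{l∈P3} a_l² = 0 if and only if ∑_{l∈P3} b_l² = 0. In other words, it is not possible at optimality that exactly one of the two residual energies on P3 is zero. -/

import Mathlib

/-- Feasibility for the compressed-distance program. -/
def Feasible {ι : Type*} [DecidableEq ι] (P1 P2 P3 : Finset ι) (A B eX eQ : ℝ)
    (a b : ι → ℝ) : Prop :=
  (∀ l ∈ P1 ∪ P3, 0 ≤ a l ∧ a l ≤ A) ∧
  (∀ l ∈ P2 ∪ P3, 0 ≤ b l ∧ b l ≤ B) ∧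
  (∑ l ∈ P1 ∪ P3, (a l) ^ 2) ≤ eX ∧
  (∑ l ∈ P2 ∪ P3, (b l) ^ 2) ≤ eQ

/-- Objective of the compressed-distance program. -/
def Obj {ι : Type*} (P1 P2 P3 : Finset ι) (bbar abar : ι → ℝ) (a b : ι → ℝ) : ℝ :=
  -∑ l ∈ P1, a l * bbar l - ∑ l ∈ P2, abar l * b l - ∑ l ∈ P3, a l * b l

theorem Finset.sum_eq_sum_add_sub_of_eq_off {ι : Type*} [DecidableEq ι] {s : Finset ι}
    {f g : ι → ℝ} {k : ι} (hk : k ∈ s) (h : ∀ l ∈ s, l ≠ k → g l = f l) :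
    ∑ l ∈ s, g l = ∑ l ∈ s, f l + (g k - f k) := by
  have he : ∑ l ∈ s.erase k, g l = ∑ l ∈ s.erase k, f l :=
    Finset.sum_congr rfl fun l hl =>
      h l (Finset.mem_of_mem_erase hl) (Finset.ne_of_mem_erase hl)
  rw [← Finset.add_sum_erase s g hk, ← Finset.add_sum_erase s f hk, he]
  ring

theorem Feasible.swap {ι : Type*} [DecidableEq ι] {P1 P2 P3 : Finset ι} {A B eX eQ : ℝ}
    {a b : ι → ℝ} (h : Feasible P1 P2 P3 A B eX eQ a b) :
    Feasible P2 P1 P3 B A eQ eX b a :=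
  ⟨h.2.1, h.1, h.2.2.2, h.2.2.1⟩

theorem Obj_swap {ι : Type*} (P1 P2 P3 : Finset ι) (bbar abar a b : ι → ℝ) :
    Obj P2 P1 P3 abar bbar b a = Obj P1 P2 P3 bbar abar a b := by
  simp only [Obj, mul_comm (b _), mul_comm (bbar _)]
  ring

/-- If the first residual energy vanishes at an optimum, so does the second: otherwise moving a
small amount of energy onto an index of `P3` where `b` is positive would gain at first order and
cost only at second order. -/
theorem residual_energy_eq_zero_of_eq_zero {ι : Type*} [DecidableEq ι]
    {P1 P2 P3 : Finset ι} (h13 : Disjoint P1 P3)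
    {A B eX eQ : ℝ} (hA : 0 < A) (hB : 0 < B) (heX : 0 < eX)
    {bbar abar : ι → ℝ} (hbbar : ∀ l ∈ P1, B ≤ bbar l) {a b : ι → ℝ}
    (hfeas : Feasible P1 P2 P3 A B eX eQ a b)
    (hopt : ∀ a' b' : ι → ℝ, Feasible P1 P2 P3 A B eX eQ a' b' →
      Obj P1 P2 P3 bbar abar a b ≤ Obj P1 P2 P3 bbar abar a' b')
    (h : ∑ l ∈ P3, (a l) ^ 2 = 0) : ∑ l ∈ P3, (b l) ^ 2 = 0 := by
  obtain ⟨ha, hb, hX, hQ⟩ := hfeas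
  have ha3 : ∀ l ∈ P3, a l = 0 := by
    intro l hl
    have := (Finset.sum_eq_zero_iff_of_nonneg fun l _ => sq_nonneg (a l)).1 h l hl
    exact pow_eq_zero_iff two_ne_zero |>.1 this
  by_contra hne
  obtain ⟨m, hm, hbm⟩ := Finset.exists_ne_zero_of_sum_ne_zero hne
  have hbm : 0 < b m :=
    lt_of_le_of_ne (hb m (Finset.mem_union_right _ hm)).1 fun h0 => hbm (by simp [← h0])
  have ham : a m = 0 := ha3 m hm
  have hm1 : m ∉ P1 := fun hm' => Finset.disjoint_left.1 h13 hm' hm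
  rw [Finset.sum_union h13] at hX
  by_cases hz : ∀ k ∈ P1, a k = 0
  · obtain ⟨t, ht, htA, htX⟩ : ∃ t : ℝ, 0 < t ∧ t ≤ A ∧ t ^ 2 ≤ eX := by
      refine ⟨min A √eX, lt_min hA (Real.sqrt_pos.2 heX), min_le_left _ _, ?_⟩
      calc (min A √eX) ^ 2 ≤ √eX ^ 2 := by
            have := (lt_min hA (Real.sqrt_pos.2 heX)).le
            gcongr
            exact min_le_right _ _
        _ = eX := Real.sq_sqrt heX.le
    set a' := Function.update a m t
    have hm' : a' m = t := by simp [a']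
    have hoff : ∀ l, l ≠ m → a' l = a l := fun l hl => by simp [a', hl]
    have h1 : ∀ l ∈ P1, a' l = a l := fun l hl => hoff l fun e => hm1 (e ▸ hl)
    have hS1 : ∑ l ∈ P1, a' l ^ 2 = 0 :=
      Finset.sum_eq_zero fun l hl => by rw [h1 l hl, hz l hl]; norm_num
    have hS3 := Finset.sum_eq_sum_add_sub_of_eq_off (f := fun l => a l ^ 2)
      (g := fun l => a' l ^ 2) hm fun l _ hl => by simp only [hoff l hl]
    have hO1 : ∑ l ∈ P1, a' l * bbar l = ∑ l ∈ P1, a l * bbar l :=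
      Finset.sum_congr rfl fun l hl => by rw [h1 l hl]
    have hO3 := Finset.sum_eq_sum_add_sub_of_eq_off (f := fun l => a l * b l)
      (g := fun l => a' l * b l) hm fun l _ hl => by simp only [hoff l hl]
    simp only [hm', ham] at hS3 hO3
    have hf : Feasible P1 P2 P3 A B eX eQ a' b := by
      refine ⟨fun l hl => ?_, hb, ?_, hQ⟩
      · by_cases e : l = m
        · rw [e, hm']; exact ⟨ht.le, htA⟩
        · rw [hoff l e]; exact ha l hl
      · rw [Finset.sum_union h13, hS1, hS3, h]
        linarith
    have := hopt a' b hf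
    simp only [Obj, hO1, hO3] at this
    nlinarith [mul_pos ht hbm]
  · push Not at hz
    obtain ⟨k, hk, hak⟩ := hz
    have hak : 0 < a k :=
      lt_of_le_of_ne (ha k (Finset.mem_union_left _ hk)).1 (Ne.symm hak)
    have hkA := (ha k (Finset.mem_union_left _ hk)).2
    have hbk : 0 < bbar k := hB.trans_le (hbbar k hk)
    have hkm : k ≠ m := fun e => hm1 (e ▸ hk)
    have hk3 : k ∉ P3 := fun hk' => Finset.disjoint_left.1 h13 hk hk'
    obtain ⟨t, ht, htk, htb⟩ : ∃ t : ℝ, 0 < t ∧ t ≤ a k ∧ t * bbar k < b m * a k := by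
      have hp : 0 < b m * a k / (2 * bbar k) := by positivity
      refine ⟨min (a k) (b m * a k / (2 * bbar k)), lt_min hak hp, min_le_left _ _, ?_⟩
      calc min (a k) (b m * a k / (2 * bbar k)) * bbar k
          ≤ b m * a k / (2 * bbar k) * bbar k := by gcongr; exact min_le_right _ _
        _ = b m * a k / 2 := by field_simp
        _ < b m * a k := half_lt_self (by positivity)
    obtain ⟨d, hd⟩ : ∃ d : ℝ, d * a k = t ^ 2 := ⟨t ^ 2 / a k, by field_simp⟩
    have hd0 : 0 ≤ d := by
      by_contra hneg
      nlinarith [sq_nonneg t]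
    have hdt : d ≤ t := by
      by_contra hlt
      nlinarith
    have hdb : d * bbar k < t * b m := by
      refine lt_of_mul_lt_mul_right ?_ hak.le
      calc d * bbar k * a k = t * (t * bbar k) := by linear_combination bbar k * hd
        _ < t * (b m * a k) := by gcongr
        _ = t * b m * a k := by ring
    set a' := Function.update (Function.update a k (a k - d)) m t
    have hm' : a' m = t := by simp [a']
    have hk' : a' k = a k - d := by simp [a', hkm]
    have hoff : ∀ l, l ≠ k → l ≠ m → a' l = a l := fun l hl hl' => by simp [a', hl, hl']
    have h1 : ∀ l ∈ P1, l ≠ k → a' l = a l := fun l hl e => hoff l e fun e => hm1 (e ▸ hl)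
    have h3 : ∀ l ∈ P3, l ≠ m → a' l = a l := fun l hl e => hoff l (fun e => hk3 (e ▸ hl)) e
    have hS1 := Finset.sum_eq_sum_add_sub_of_eq_off (f := fun l => a l ^ 2)
      (g := fun l => a' l ^ 2) hk fun l hl e => by simp only [h1 l hl e]
    have hS3 := Finset.sum_eq_sum_add_sub_of_eq_off (f := fun l => a l ^ 2)
      (g := fun l => a' l ^ 2) hm fun l hl e => by simp only [h3 l hl e]
    have hO1 := Finset.sum_eq_sum_add_sub_of_eq_off (f := fun l => a l * bbar l)
      (g := fun l => a' l * bbar l) hk fun l hl e => by simp only [h1 l hl e]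
    have hO3 := Finset.sum_eq_sum_add_sub_of_eq_off (f := fun l => a l * b l)
      (g := fun l => a' l * b l) hm fun l hl e => by simp only [h3 l hl e]
    simp only [hm', hk', ham] at hS1 hS3 hO1 hO3
    have hf : Feasible P1 P2 P3 A B eX eQ a' b := by
      refine ⟨fun l hl => ?_, hb, ?_, hQ⟩
      · by_cases e : l = m
        · rw [e, hm']; exact ⟨ht.le, htk.trans hkA⟩
        · by_cases e' : l = k
          · rw [e', hk']; constructor <;> linarith
          · rw [hoff l e' e]; exact ha l hl
      · rw [Finset.sum_union h13, hS1, hS3]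
        nlinarith [mul_nonneg hd0 (sub_nonneg.2 (hdt.trans htk))]
    have := hopt a' b hf
    simp only [Obj, hO1, hO3] at this
    linarith

/-- At optimality, the residual energies on the common unknown coefficients vanish
together: it is impossible that exactly one of `∑_{l∈P3} a l ^ 2`, `∑_{l∈P3} b l ^ 2`
is zero. -/
theorem residual_energies_vanish_together {ι : Type*} [DecidableEq ι]
    (P1 P2 P3 : Finset ι)
    (h12 : Disjoint P1 P2) (h13 : Disjoint P1 P3) (h23 : Disjoint P2 P3)
    (A B eX eQ : ℝ) (hA : 0 < A) (hB : 0 < B) (heX : 0 < eX) (heQ : 0 < eQ)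
    (bbar abar : ι → ℝ)
    (hbbar : ∀ l ∈ P1, B ≤ bbar l) (habar : ∀ l ∈ P2, A ≤ abar l)
    (a b : ι → ℝ)
    (hfeas : Feasible P1 P2 P3 A B eX eQ a b)
    (hopt : ∀ a' b' : ι → ℝ, Feasible P1 P2 P3 A B eX eQ a' b' →
      Obj P1 P2 P3 bbar abar a b ≤ Obj P1 P2 P3 bbar abar a' b') :
    (∑ l ∈ P3, (a l) ^ 2) = 0 ↔ (∑ l ∈ P3, (b l) ^ 2) = 0 := by
  exact ⟨residual_energy_eq_zero_of_eq_zero h13 hA hB heX hbbar hfeas hopt,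
    residual_energy_eq_zero_of_eq_zero h23 hB hA heQ habar hfeas.swap fun b' a' h => by
      rw [Obj_swap P1 P2, Obj_swap P1 P2]
      exact hopt a' b' h.swap⟩
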